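/- arXiv:2001.11648 — 5 statements merged into one kernel-verified Lean document; each statement's English description precedes it below -/
import Mathlib

section
/- Strict improvement by raising IoT powers (step in the proof of Lemma 1): for every feasible point x ∈ F with P_pI + P_cI < P_tI and every δ with 0 < δ ≤ (P_tI − P_pI − P_cI)/2, the point x′ obtained from x by replacing P_pI with P_pI + δ and P_cI with P_cI + δ is feasible and satisfies T(x′) < T(x). -/
/-!
Raising the IoT compute power strictly lowers `T_I` when `m < B`, and raising the IoT transmit
power strictly lowers `T_F` and `T_C` when `m > 0` (`compute_time_strictAnti`,
`transmit_time_strictAnti`). Hence each new layer latency lies strictly below the old maximum: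
in the degenerate case `m = B` the new `T_I` is `0`, while the old `T_F` is positive; in the
degenerate case `m = 0` also `k = 0`, so the new `T_F` and `T_C` are `0`, while the old `T_I` is
positive.
-/

open Real

structure Pt where
  m : ℝ
  k : ℝ
  PpI : ℝ
  PcI : ℝ
  PpF : ℝ
  PcF : ℝ
  PpC : ℝ

/-- Feasibility of a point `x = (m, k, P_pI, P_cI, P_pF, P_cF, P_pC)`. -/
def Feasible (B bI bF bC PtI PtF PtC : ℝ) (x : Pt) : Prop :=
  0 ≤ x.k ∧ x.k ≤ x.m ∧ x.m ≤ B ∧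
  bI < x.PpI ∧ 0 < x.PcI ∧ x.PpI + x.PcI ≤ PtI ∧
  bF < x.PpF ∧ 0 < x.PcF ∧ x.PpF + x.PcF ≤ PtF ∧
  bC < x.PpC ∧ x.PpC ≤ PtC

/-- IoT-layer latency. -/
noncomputable def TIoT (B β cI aI bI : ℝ) (x : Pt) : ℝ :=
  cI * (B - x.m) * ((x.PpI - bI) / aI) ^ (-(1 / β))

/-- Fog-layer latency. -/
noncomputable def TFog (β cF aF bF WIF g : ℝ) (x : Pt) : ℝ :=
  x.m / (WIF * Real.logb 2 (1 + g * x.PcI)) +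
    cF * (x.m - x.k) * ((x.PpF - bF) / aF) ^ (-(1 / β))

/-- Cloud-layer latency. -/
noncomputable def TCloud (β cC aC bC WIF WFC g h : ℝ) (x : Pt) : ℝ :=
  x.m / (WIF * Real.logb 2 (1 + g * x.PcI)) +
    x.k / (WFC * Real.logb 2 (1 + h * x.PcF)) +
    cC * x.k * ((x.PpC - bC) / aC) ^ (-(1 / β))

/-- Total latency `T = max (T_I, T_F, T_C)`. -/
noncomputable def Ttot (B β cI cF cC aI aF aC bI bF bC WIF WFC g h : ℝ) (x : Pt) : ℝ :=
  max (TIoT B β cI aI bI x) (max (TFog β cF aF bF WIF g x) (TCloud β cC aC bC WIF WFC g h x))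

/-- The compute time per bit is strictly decreasing in the compute power. -/
lemma compute_time_strictAnti {β a b p q : ℝ} (hβ : 0 < β) (ha : 0 < a) (hp : b < p)
    (hpq : p < q) :
    ((q - b) / a) ^ (-(1 / β)) < ((p - b) / a) ^ (-(1 / β)) := by
  apply Real.rpow_lt_rpow_of_neg
  · exact div_pos (by linarith) ha
  · gcongr
  · have : 0 < 1 / β := by positivity
    linarith

lemma logb_rate_pos {g p : ℝ} (hg : 0 < g) (hp : 0 < p) : 0 < Real.logb 2 (1 + g * p) := by
  apply Real.logb_pos (by norm_num)
  have : 0 < g * p := by positivity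
  linarith

/-- The time to transmit a positive load is strictly decreasing in the transmit power. -/
lemma transmit_time_strictAnti {m W g p q : ℝ} (hm : 0 < m) (hW : 0 < W) (hg : 0 < g)
    (hp : 0 < p) (hpq : p < q) :
    m / (W * Real.logb 2 (1 + g * q)) < m / (W * Real.logb 2 (1 + g * p)) := by
  have hpos := logb_rate_pos hg hp
  apply div_lt_div_of_pos_left hm (by positivity)
  apply mul_lt_mul_of_pos_left _ hW
  apply Real.logb_lt_logb (by norm_num) (by positivity)
  gcongr

/-- Strict improvement by raising IoT powers (step in the proof of Lemma 1). -/
theorem strict_improvement_iot_powers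
    (B β cI cF cC aI aF aC bI bF bC WIF WFC g h PtI PtF PtC : ℝ)
    (hB : 0 < B) (hβ : 0 < β)
    (hcI : 0 < cI) (hcF : 0 < cF) (hcC : 0 < cC)
    (haI : 0 < aI) (haF : 0 < aF) (haC : 0 < aC)
    (hbI : 0 ≤ bI) (hbF : 0 ≤ bF) (hbC : 0 ≤ bC)
    (hWIF : 0 < WIF) (hWFC : 0 < WFC)
    (hg : 0 < g) (hh : 0 < h)
    (hPtI : bI < PtI) (hPtF : bF < PtF) (hPtC : bC < PtC)
    (x : Pt) (hx : Feasible B bI bF bC PtI PtF PtC x)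
    (hlt : x.PpI + x.PcI < PtI)
    (δ : ℝ) (hδ0 : 0 < δ) (hδ : δ ≤ (PtI - x.PpI - x.PcI) / 2) :
    Feasible B bI bF bC PtI PtF PtC { x with PpI := x.PpI + δ, PcI := x.PcI + δ } ∧
    Ttot B β cI cF cC aI aF aC bI bF bC WIF WFC g h { x with PpI := x.PpI + δ, PcI := x.PcI + δ } < Ttot B β cI cF cC aI aF aC bI bF bC WIF WFC g h x := by
  obtain ⟨hk, hkm, hmB, hPpI, hPcI, hsum, hPpF, hPcF, hsumF, hPpC, hPpC'⟩ := hx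
  refine ⟨⟨hk, hkm, hmB, ?_, ?_, ?_, hPpF, hPcF, hsumF, hPpC, hPpC'⟩, ?_⟩
  · show bI < x.PpI + δ
    linarith
  · show 0 < x.PcI + δ
    linarith
  · show x.PpI + δ + (x.PcI + δ) ≤ PtI
    linarith
  have hm0 : 0 ≤ x.m := hk.trans hkm
  have hcomp := compute_time_strictAnti hβ haI hPpI (show x.PpI < x.PpI + δ by linarith)
  have hI_pos : 0 < ((x.PpI - bI) / aI) ^ (-(1 / β)) :=
    Real.rpow_pos_of_pos (div_pos (by linarith) haI) _
  have hF_nonneg : 0 ≤ cF * (x.m - x.k) * ((x.PpF - bF) / aF) ^ (-(1 / β)) :=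
    mul_nonneg (mul_nonneg hcF.le (by linarith))
      (Real.rpow_nonneg (div_nonneg (by linarith) haF.le) _)
  have hrate := logb_rate_pos hg hPcI
  unfold Ttot
  refine max_lt ?_ (max_lt ?_ ?_)
  · rcases hmB.lt_or_eq with hm | hm
    · refine lt_max_of_lt_left ?_
      exact mul_lt_mul_of_pos_left hcomp (mul_pos hcI (by linarith))
    · refine lt_max_of_lt_right (lt_max_of_lt_left ?_)
      have hmpos : 0 < x.m := by linarith
      have : 0 < x.m / (WIF * Real.logb 2 (1 + g * x.PcI)) := by positivity
      simp only [TIoT, TFog]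
      rw [show B - x.m = 0 by linarith]
      linarith
  · rcases hm0.lt_or_eq with hm | hm
    · refine lt_max_of_lt_right (lt_max_of_lt_left ?_)
      have := transmit_time_strictAnti hm hWIF hg hPcI (show x.PcI < x.PcI + δ by linarith)
      simp only [TFog]
      linarith
    · refine lt_max_of_lt_left ?_
      have hk0 : x.k = 0 := by linarith
      simp only [TIoT, TFog, ← hm, hk0, zero_div, sub_zero, mul_zero, zero_mul, add_zero]
      positivity
  · rcases hm0.lt_or_eq with hm | hm
    · refine lt_max_of_lt_right (lt_max_of_lt_right ?_)
      have := transmit_time_strictAnti hm hWIF hg hPcI (show x.PcI < x.PcI + δ by linarith)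
      simp only [TCloud]
      linarith
    · refine lt_max_of_lt_left ?_
      have hk0 : x.k = 0 := by linarith
      simp only [TIoT, TCloud, ← hm, hk0, zero_div, sub_zero, mul_zero, zero_mul, add_zero]
      positivity
end

section
/- Improvement by raising fog powers (step in the proof of Lemma 1): for every x ∈ F with k > 0 and P_pF + P_cF < P_tF, and every δ with 0 < δ ≤ (P_tF − P_pF − P_cF)/2, the point x′ obtained from x by replacing P_pF with P_pF + δ and P_cF with P_cF + δ is feasible and satisfies T_I(x′) = T_I(x), T_F(x′) ≤ T_F(x) and T_C(x′) < T_C(x); consequently T(x′) ≤ T(x), and if moreover max(T_F(x), T_C(x)) > T_I(x), then T(x′) < T(x). -/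
/-!
Raising `P_pF` strictly lowers the fog computing time `c_F (m - k) ((P_pF - b_F) / a_F) ^ (-1/β)`
when `k < m`, and raising `P_cF` strictly lowers the fog-to-cloud transmission time because `0 < k`.
The maximum `max T_F T_C` then drops strictly in all cases: if `k < m`, both `T_F` and
`T_C` drop; if `k = m`, `T_F` is unchanged and equals the first summand of `T_C`, hence
is already below `T_C`, which drops but stays above the new `T_F`. The IoT latency does not involve
the fog powers, so a strict improvement of `T` follows whenever `T_I` is not the bottleneck.
-/

open Real

/-- Improvement by raising fog powers (step in the proof of Lemma 1). -/
theorem improvement_fog_powers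
    (B β cI cF cC aI aF aC bI bF bC WIF WFC g h PtI PtF PtC : ℝ)
    (hB : 0 < B) (hβ : 0 < β)
    (hcI : 0 < cI) (hcF : 0 < cF) (hcC : 0 < cC)
    (haI : 0 < aI) (haF : 0 < aF) (haC : 0 < aC)
    (hbI : 0 ≤ bI) (hbF : 0 ≤ bF) (hbC : 0 ≤ bC)
    (hWIF : 0 < WIF) (hWFC : 0 < WFC)
    (hg : 0 < g) (hh : 0 < h)
    (hPtI : bI < PtI) (hPtF : bF < PtF) (hPtC : bC < PtC)
    (x : Pt) (hx : Feasible B bI bF bC PtI PtF PtC x)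
    (hk : 0 < x.k)
    (hlt : x.PpF + x.PcF < PtF)
    (δ : ℝ) (hδ0 : 0 < δ) (hδ : δ ≤ (PtF - x.PpF - x.PcF) / 2) :
    Feasible B bI bF bC PtI PtF PtC { x with PpF := x.PpF + δ, PcF := x.PcF + δ } ∧
    TIoT B β cI aI bI { x with PpF := x.PpF + δ, PcF := x.PcF + δ } = TIoT B β cI aI bI x ∧
    TFog β cF aF bF WIF g { x with PpF := x.PpF + δ, PcF := x.PcF + δ } ≤ TFog β cF aF bF WIF g x ∧
    TCloud β cC aC bC WIF WFC g h { x with PpF := x.PpF + δ, PcF := x.PcF + δ } < TCloud β cC aC bC WIF WFC g h x ∧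
    Ttot B β cI cF cC aI aF aC bI bF bC WIF WFC g h { x with PpF := x.PpF + δ, PcF := x.PcF + δ } ≤ Ttot B β cI cF cC aI aF aC bI bF bC WIF WFC g h x ∧
    (TIoT B β cI aI bI x < max (TFog β cF aF bF WIF g x) (TCloud β cC aC bC WIF WFC g h x) →
      Ttot B β cI cF cC aI aF aC bI bF bC WIF WFC g h { x with PpF := x.PpF + δ, PcF := x.PcF + δ } < Ttot B β cI cF cC aI aF aC bI bF bC WIF WFC g h x) := by
  obtain ⟨hk0, hkm, hmB, h1, h2, h3, h4, h5, h6, h7, h8⟩ := hx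
  have hI : TIoT B β cI aI bI { x with PpF := x.PpF + δ, PcF := x.PcF + δ } =
      TIoT B β cI aI bI x := rfl
  have hβ' : -(1 / β) < 0 := neg_lt_zero.mpr (one_div_pos.mpr hβ)
  have hpow : ((x.PpF + δ - bF) / aF) ^ (-(1 / β)) < ((x.PpF - bF) / aF) ^ (-(1 / β)) := by
    apply Real.rpow_lt_rpow_of_neg (div_pos (by linarith) haF) _ hβ'
    exact div_lt_div_of_pos_right (by linarith) haF
  have hF : TFog β cF aF bF WIF g { x with PpF := x.PpF + δ, PcF := x.PcF + δ } ≤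
      TFog β cF aF bF WIF g x := by
    simp only [TFog]
    have := mul_le_mul_of_nonneg_left hpow.le (mul_nonneg hcF.le (sub_nonneg.mpr hkm))
    linarith
  have hhP : 0 < h * x.PcF := mul_pos hh h5
  have hlog : 0 < Real.logb 2 (1 + h * x.PcF) := Real.logb_pos (by norm_num) (by linarith)
  have hlog' : Real.logb 2 (1 + h * x.PcF) < Real.logb 2 (1 + h * (x.PcF + δ)) :=
    Real.logb_lt_logb (by norm_num) (by linarith) (by nlinarith [mul_pos hh hδ0])
  have hC : TCloud β cC aC bC WIF WFC g h { x with PpF := x.PpF + δ, PcF := x.PcF + δ } <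
      TCloud β cC aC bC WIF WFC g h x := by
    simp only [TCloud]
    have := div_lt_div_of_pos_left hk (mul_pos hWFC hlog) (mul_lt_mul_of_pos_left hlog' hWFC)
    linarith
  have hmax : max (TFog β cF aF bF WIF g { x with PpF := x.PpF + δ, PcF := x.PcF + δ })
      (TCloud β cC aC bC WIF WFC g h { x with PpF := x.PpF + δ, PcF := x.PcF + δ }) <
      max (TFog β cF aF bF WIF g x) (TCloud β cC aC bC WIF WFC g h x) := by
    refine max_lt ?_ (lt_max_of_lt_right hC)
    rcases hkm.lt_or_eq with hkm' | hkm'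
    · apply lt_max_of_lt_left
      simp only [TFog]
      have := mul_lt_mul_of_pos_left hpow (mul_pos hcF (sub_pos.mpr hkm'))
      linarith
    · -- With `k = m` the fog computes nothing, so `T_F` is only the IoT-to-fog transmission time.
      apply lt_max_of_lt_right
      refine hF.trans_lt ?_
      simp only [TFog, TCloud]
      have e1 : cF * (x.m - x.k) * ((x.PpF - bF) / aF) ^ (-(1 / β)) = 0 := by
        rw [hkm', sub_self, mul_zero, zero_mul]
      have e2 : 0 < x.k / (WFC * Real.logb 2 (1 + h * x.PcF)) := div_pos hk (mul_pos hWFC hlog)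
      have e3 : 0 < cC * x.k * ((x.PpC - bC) / aC) ^ (-(1 / β)) :=
        mul_pos (mul_pos hcC hk) (Real.rpow_pos_of_pos (div_pos (by linarith) haC) _)
      linarith
  refine ⟨⟨hk0, hkm, hmB, h1, h2, h3, ?_, ?_, ?_, h7, h8⟩, hI, hF, hC, ?_, fun hlt' => ?_⟩
  · dsimp only
    linarith
  · dsimp only
    linarith
  · dsimp only
    linarith
  · exact max_le_max hI.le hmax.le
  · exact max_lt (lt_max_of_lt_right (hI.trans_lt hlt')) (lt_max_of_lt_right hmax)
end

section
/- Consequence of Lemma 1 at the level of optimal values: the infimum of T over F equals the infimum of T over the subset F_eq = {x ∈ F : P_pI + P_cI = P_tI, P_pF + P_cF = P_tF, P_pC = P_tC} of points that use their full power budgets at every layer. -/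
/-!
Unused power budget can always be spent without increasing the latency: keep `m`, `k` and the
computing powers of the IoT and fog layers, raise the communication powers to `P_tI - P_pI` and
`P_tF - P_pF`, and raise the cloud power to `P_tC`. Communication time is antitone in transmit
power (`div_mul_logb_anti`) and computing time is antitone in computing power
(`mul_rpow_neg_anti`), so `T` does not increase (`exists_full_power_le`). Thus the value sets over
`F` and over its full-power subset are mutually dominated from below, and have the same infimum.
-/

open Real

theorem div_mul_logb_anti {n W c p q : ℝ} (hn : 0 ≤ n) (hW : 0 < W) (hc : 0 < c)
    (hp : 0 < p) (hpq : p ≤ q) :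
    n / (W * Real.logb 2 (1 + c * q)) ≤ n / (W * Real.logb 2 (1 + c * p)) := by
  have hcp : 0 < c * p := mul_pos hc hp
  have hlog : 0 < Real.logb 2 (1 + c * p) := Real.logb_pos one_lt_two (by linarith)
  have hmono : Real.logb 2 (1 + c * p) ≤ Real.logb 2 (1 + c * q) :=
    Real.logb_le_logb_of_le one_lt_two (by linarith) (by gcongr)
  gcongr

theorem mul_rpow_neg_anti {A a b p q β : ℝ} (hA : 0 ≤ A) (ha : 0 < a) (hβ : 0 < β)
    (hp : b < p) (hpq : p ≤ q) :
    A * ((q - b) / a) ^ (-(1 / β)) ≤ A * ((p - b) / a) ^ (-(1 / β)) := by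
  have hpos : 0 < (p - b) / a := div_pos (sub_pos.2 hp) ha
  refine mul_le_mul_of_nonneg_left (Real.rpow_le_rpow_of_nonpos hpos (by gcongr) ?_) hA
  have : 0 < 1 / β := one_div_pos.2 hβ
  linarith

/-- Every feasible point is weakly dominated by a feasible point that exhausts all three power
budgets. -/
theorem exists_full_power_le
    {B β cI cF cC aI aF aC bI bF bC WIF WFC g h PtI PtF PtC : ℝ}
    (hβ : 0 < β) (hcC : 0 < cC) (haC : 0 < aC) (hWIF : 0 < WIF) (hWFC : 0 < WFC)
    (hg : 0 < g) (hh : 0 < h) {x : Pt} (hx : Feasible B bI bF bC PtI PtF PtC x) :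
    ∃ y : Pt, (Feasible B bI bF bC PtI PtF PtC y ∧
        y.PpI + y.PcI = PtI ∧ y.PpF + y.PcF = PtF ∧ y.PpC = PtC) ∧
      Ttot B β cI cF cC aI aF aC bI bF bC WIF WFC g h y ≤
        Ttot B β cI cF cC aI aF aC bI bF bC WIF WFC g h x := by
  obtain ⟨hk, hkm, hmB, hpI, hcI, hI, hpF, hcF, hF, hpC, hC⟩ := hx
  have hIF := div_mul_logb_anti (hk.trans hkm) hWIF hg hcI (le_sub_iff_add_le'.2 hI)
  have hFC := div_mul_logb_anti hk hWFC hh hcF (le_sub_iff_add_le'.2 hF)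
  have hCC := mul_rpow_neg_anti (mul_nonneg hcC.le hk) haC hβ hpC hC
  refine ⟨⟨x.m, x.k, x.PpI, PtI - x.PpI, x.PpF, PtF - x.PpF, PtC⟩, ⟨?_, ?_, ?_, rfl⟩, ?_⟩
  · refine ⟨hk, hkm, hmB, hpI, ?_, ?_, hpF, ?_, ?_, hpC.trans_le hC, le_rfl⟩ <;>
      dsimp only <;> linarith
  · exact add_sub_cancel _ _
  · exact add_sub_cancel _ _
  · exact max_le_max le_rfl
      (max_le_max (add_le_add hIF le_rfl) (add_le_add (add_le_add hIF hFC) hCC))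

/-- Consequence of Lemma 1 at the level of optimal values: the infimum of `T` over the
feasible set equals the infimum of `T` over the subset of points using full power budgets. -/
theorem inf_latency_eq_inf_over_full_power
    (B β cI cF cC aI aF aC bI bF bC WIF WFC g h PtI PtF PtC : ℝ)
    (hB : 0 < B) (hβ : 0 < β)
    (hcI : 0 < cI) (hcF : 0 < cF) (hcC : 0 < cC)
    (haI : 0 < aI) (haF : 0 < aF) (haC : 0 < aC)
    (hbI : 0 ≤ bI) (hbF : 0 ≤ bF) (hbC : 0 ≤ bC)
    (hWIF : 0 < WIF) (hWFC : 0 < WFC)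
    (hg : 0 < g) (hh : 0 < h)
    (hPtI : bI < PtI) (hPtF : bF < PtF) (hPtC : bC < PtC)
 :
    sInf ((Ttot B β cI cF cC aI aF aC bI bF bC WIF WFC g h) '' {x : Pt | Feasible B bI bF bC PtI PtF PtC x}) =
      sInf ((Ttot B β cI cF cC aI aF aC bI bF bC WIF WFC g h) ''
        {x : Pt | Feasible B bI bF bC PtI PtF PtC x ∧ x.PpI + x.PcI = PtI ∧ x.PpF + x.PcF = PtF ∧ x.PpC = PtC}) := by
  apply csInf_eq_csInf_of_forall_exists_le
  · rintro _ ⟨x, hx, rfl⟩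
    obtain ⟨y, hy, hle⟩ := exists_full_power_le (cI := cI) (cF := cF) (aI := aI) (aF := aF)
      hβ hcC haC hWIF hWFC hg hh hx
    exact ⟨_, ⟨y, hy, rfl⟩, hle⟩
  · rintro _ ⟨y, hy, rfl⟩
    exact ⟨_, ⟨y, hy.1, rfl⟩, le_rfl⟩
end

section
/- Closed form of the stage-1 subproblem at a fixed power split (iteration 1): let α ∈ (0, 1 − b_I/P_tI), and set A = c_I·B·(((1 − α)·P_tI − b_I)/a_I)^(−1/β) and C = 1/(W_IF·log₂(1 + α·g·P_tI)) + c_F·((P_tF − b_F)/a_F)^(−1/β). Then for every m with 0 ≤ m ≤ B, max( c_I·(B − m)·(((1 − α)·P_tI − b_I)/a_I)^(−1/β), C·m ) ≥ A·C·B/(A + C·B), with equality if and only if m = A·B/(A + C·B); moreover this unique minimizer satisfies 0 < A·B/(A + C·B) < B, i.e. it is strictly optimal to offload some but not all of the bits. -/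
/-!
The local latency is a strictly decreasing affine function `K * (B - m)` of the offloaded amount
`m`, with `K = A / B > 0`, and the offloading latency `C * m` is strictly increasing. The two lines
cross at `m₀ = A * B / (A + C * B)`, with common value `A * C * B / (A + C * B)`; on either side of
`m₀` one of them lies strictly above this value (`max_affine_crossing`). The bounds on `α` keep
the bases of the powers and the logarithm positive, hence `K, C > 0`, which also puts `m₀` strictly
between `0` and `B`.
-/

open Real

/-- The maximum of a strictly decreasing and a strictly increasing affine function that agree
(with value `V`) at `m₀` is minimized exactly at `m₀`. -/
lemma max_affine_crossing {K C B m₀ V : ℝ} (hK : 0 < K) (hC : 0 < C)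
    (h₁ : K * (B - m₀) = V) (h₂ : C * m₀ = V) (m : ℝ) :
    V ≤ max (K * (B - m)) (C * m) ∧ (max (K * (B - m)) (C * m) = V ↔ m = m₀) := by
  rcases lt_trichotomy m m₀ with h | h | h
  · have hlt : V < max (K * (B - m)) (C * m) :=
      lt_max_of_lt_left (by rw [← h₁]; gcongr)
    exact ⟨hlt.le, fun e => absurd e hlt.ne', fun e => absurd e h.ne⟩
  · subst h
    simp [h₁, h₂]
  · have hlt : V < max (K * (B - m)) (C * m) :=
      lt_max_of_lt_right (by rw [← h₂]; gcongr)
    exact ⟨hlt.le, fun e => absurd e hlt.ne', fun e => absurd e h.ne'⟩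

/-- Closed form of the stage-1 subproblem at a fixed power split (iteration 1). -/
theorem stage1_closed_form
    (B β cI cF aI aF bI bF WIF g PtI PtF : ℝ)
    (hB : 0 < B) (hβ : 0 < β)
    (hcI : 0 < cI) (hcF : 0 < cF)
    (haI : 0 < aI) (haF : 0 < aF)
    (hbI : 0 ≤ bI) (hbF : 0 ≤ bF)
    (hWIF : 0 < WIF) (hg : 0 < g)
    (hPtI : bI < PtI) (hPtF : bF < PtF)
    (α : ℝ) (hα : α ∈ Set.Ioo 0 (1 - bI / PtI))
    (A C : ℝ)
    (hA : A = cI * B * (((1 - α) * PtI - bI) / aI) ^ (-(1 / β)))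
    (hC : C = 1 / (WIF * Real.logb 2 (1 + α * g * PtI)) +
      cF * ((PtF - bF) / aF) ^ (-(1 / β))) :
    (∀ m : ℝ, 0 ≤ m → m ≤ B →
      A * C * B / (A + C * B) ≤
        max (cI * (B - m) * (((1 - α) * PtI - bI) / aI) ^ (-(1 / β))) (C * m) ∧
      (max (cI * (B - m) * (((1 - α) * PtI - bI) / aI) ^ (-(1 / β))) (C * m) =
          A * C * B / (A + C * B) ↔ m = A * B / (A + C * B))) ∧
    0 < A * B / (A + C * B) ∧ A * B / (A + C * B) < B := by
  obtain ⟨hα0, hα1⟩ := hα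
  have hP : 0 < PtI := hbI.trans_lt hPtI
  have hbase : 0 < (1 - α) * PtI - bI := by
    have h : bI / PtI < 1 - α := by linarith
    rw [div_lt_iff₀ hP] at h
    linarith
  have hk : 0 < (((1 - α) * PtI - bI) / aI) ^ (-(1 / β)) :=
    Real.rpow_pos_of_pos (div_pos hbase haI) _
  have hC0 : 0 < C := by
    have hlog : 0 < Real.logb 2 (1 + α * g * PtI) :=
      Real.logb_pos one_lt_two (by linarith [mul_pos (mul_pos hα0 hg) hP])
    have hkF : 0 < ((PtF - bF) / aF) ^ (-(1 / β)) :=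
      Real.rpow_pos_of_pos (div_pos (sub_pos.2 hPtF) haF) _
    rw [hC]
    positivity
  clear hC
  generalize (((1 - α) * PtI - bI) / aI) ^ (-(1 / β)) = k at hA hk ⊢
  have hA0 : 0 < A := by rw [hA]; positivity
  have hD : 0 < A + C * B := by positivity
  refine ⟨fun m _ _ => ?_, by positivity, ?_⟩
  · rw [show cI * (B - m) * k = cI * k * (B - m) by ring]
    refine max_affine_crossing (mul_pos hcI hk) hC0 ?_ ?_ m
    · have hKB : cI * k = A / B := by rw [hA]; field_simp
      rw [hKB]
      field_simp
      ring
    · field_simp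
  · rw [div_lt_iff₀ hD]
    nlinarith [mul_pos (mul_pos hC0 hB) hB]
end

section
/- Fundamental latency lower bound for the three-layer system: set K_I = ((P_tI − b_I)/a_I)^(−1/β) and K_c = 1/(W_IF·log₂(1 + g·P_tI)). Then for every feasible point x ∈ F, T(x) ≥ (c_I·K_I·B·K_c)/(c_I·K_I + K_c). (This follows because T(x) ≥ max(c_I·(B − m)·K_I, m·K_c) for the offloaded workload m of x, and the right-hand side, minimized over m, equals the stated bound.) -/
/-!
The Internet-of-Things layer spends at most its whole budget `PtI` on computing and at most `PtI` on
transmitting, so by monotonicity `T_I ≥ cI * (B - m) * KI` and `T_F ≥ m * Kc`. The total latency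
dominates both, hence also their weighted average with weights proportional to `Kc` and `cI * KI`;
these weights cancel the dependence on `m` and give exactly the stated bound.
-/

open Real

/-- Fundamental latency lower bound for the three-layer system. -/
theorem fundamental_latency_lower_bound
    (B β cI cF cC aI aF aC bI bF bC WIF WFC g h PtI PtF PtC : ℝ)
    (hB : 0 < B) (hβ : 0 < β)
    (hcI : 0 < cI) (hcF : 0 < cF) (hcC : 0 < cC)
    (haI : 0 < aI) (haF : 0 < aF) (haC : 0 < aC)
    (hbI : 0 ≤ bI) (hbF : 0 ≤ bF) (hbC : 0 ≤ bC)
    (hWIF : 0 < WIF) (hWFC : 0 < WFC)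
    (hg : 0 < g) (hh : 0 < h)
    (hPtI : bI < PtI) (hPtF : bF < PtF) (hPtC : bC < PtC)
    (KI Kc : ℝ)
    (hKI : KI = ((PtI - bI) / aI) ^ (-(1 / β)))
    (hKc : Kc = 1 / (WIF * Real.logb 2 (1 + g * PtI)))
    (x : Pt) (hx : Feasible B bI bF bC PtI PtF PtC x) :
    cI * KI * B * Kc / (cI * KI + Kc) ≤ Ttot B β cI cF cC aI aF aC bI bF bC WIF WFC g h x := by
  obtain ⟨hk, hkm, hmB, hPpI, hPcI, hsumI, hPpF, -, -, -, -⟩ := hx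
  have hm : 0 ≤ x.m := hk.trans hkm
  have hKI0 : 0 < KI := hKI ▸ Real.rpow_pos_of_pos (div_pos (by linarith) haI) _
  have hlog : 0 < Real.logb 2 (1 + g * x.PcI) :=
    Real.logb_pos (by norm_num) (by nlinarith)
  have hlogle : Real.logb 2 (1 + g * x.PcI) ≤ Real.logb 2 (1 + g * PtI) := by
    have hPc : x.PcI ≤ PtI := by linarith
    exact Real.logb_le_logb_of_le (by norm_num) (by positivity) (by gcongr)
  have hKc0 : 0 < Kc := hKc ▸ one_div_pos.2 (mul_pos hWIF (hlog.trans_le hlogle))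
  have hTI : cI * (B - x.m) * KI ≤ TIoT B β cI aI bI x := by
    unfold TIoT
    rw [hKI]
    refine mul_le_mul_of_nonneg_left ?_ (mul_nonneg hcI.le (by linarith))
    -- The exponent is negative, so raising the compute power to the full budget lowers the value.
    refine Real.rpow_le_rpow_of_nonpos (div_pos (by linarith) haI) ?_ ?_
    · gcongr
      linarith
    · have : 0 < 1 / β := by positivity
      linarith
  have hTF : x.m * Kc ≤ TFog β cF aF bF WIF g x := by
    have hcomm : x.m * Kc ≤ x.m / (WIF * Real.logb 2 (1 + g * x.PcI)) := by
      rw [hKc, mul_one_div]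
      gcongr
    have hcomp : 0 ≤ cF * (x.m - x.k) * ((x.PpF - bF) / aF) ^ (-(1 / β)) :=
      mul_nonneg (mul_nonneg hcF.le (by linarith))
        (Real.rpow_nonneg (div_nonneg (by linarith) haF.le) _)
    unfold TFog
    linarith
  have h1 : cI * (B - x.m) * KI ≤ Ttot B β cI cF cC aI aF aC bI bF bC WIF WFC g h x :=
    hTI.trans (le_max_left _ _)
  have h2 : x.m * Kc ≤ Ttot B β cI cF cC aI aF aC bI bF bC WIF WFC g h x :=
    hTF.trans ((le_max_left _ _).trans (le_max_right _ _))
  have hcK : 0 < cI * KI := mul_pos hcI hKI0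
  rw [div_le_iff₀ (add_pos hcK hKc0)]
  -- Weighting the two bounds by `Kc` and `cI * KI` eliminates `x.m` from their sum.
  linarith [mul_le_mul_of_nonneg_right h1 hKc0.le, mul_le_mul_of_nonneg_right h2 hcK.le]
end
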